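/- arXiv:2101.05880 — 2 statements merged into one kernel-verified Lean document; each statement's English description precedes it below -/
import Mathlib

section
/- A client receives zero weight exactly when its loss exceeds the threshold determined by the p-average: for every i, α*_i = 0 if and only if L̂_i ≥ λ/M_p + L̄_p, where α*_i = (m_i/M_p)·[ 1 + M_p·(L̄_p − L̂_i)/λ ]_+. In particular, α* has exactly p nonzero components. -/
/-!
Multiplying out, `α*_i ≠ 0` holds iff `M_p·L̂_i < λ + S_p`, where `S_p = Σ_{j≤p} m_j·L̂_j = M_p·L̄_p`;
this is the threshold criterion. For the count (clients numbered from `1` here), the clients with nonzero weight are exactly the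
first `p`. Membership of `p` in `goodSet` says that the `p`-th client satisfies the strict
inequality, hence so do all clients with a smaller loss. If `p < N`, maximality says
`λ + S_{p+1} ≤ M_{p+1}·L̂_{p+1}`; the terms `m_{p+1}·L̂_{p+1}` cancel, leaving
`λ + S_p ≤ M_p·L̂_{p+1}`, so the client after the `p`-th, and all those with a larger loss,
have weight zero.
-/

open Finset

noncomputable section

/-- `Mpart m k = Σ_{i=1}^k m_i`: total number of samples of the first `k` clients
(clients are 0-indexed, so these are clients `0, …, k-1`). -/
def Mpart (m : ℕ → ℝ) (k : ℕ) : ℝ := ∑ i ∈ Finset.range k, m i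

/-- `Lbar m L k = (Σ_{i=1}^k m_i·L̂_i) / M_k`: the `k`-average loss. -/
def Lbar (m L : ℕ → ℝ) (k : ℕ) : ℝ :=
  (∑ i ∈ Finset.range k, m i * L i) / Mpart m k

/-- The set `{ k ∈ {1, …, N} : 1 + M_k·(L̄_k − L̂_k)/λ > 0 }`
(with `L̂_k = L (k-1)` since losses are 0-indexed). -/
def goodSet (m L : ℕ → ℝ) (lam : ℝ) (N : ℕ) : Set ℕ :=
  {k | k ∈ Finset.Icc 1 N ∧ 0 < 1 + Mpart m k * (Lbar m L k - L (k - 1)) / lam}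

/-- `p = max{ k ∈ {1,…,N} : 1 + M_k·(L̄_k − L̂_k)/λ > 0 }`. -/
def pIdx (m L : ℕ → ℝ) (lam : ℝ) (N : ℕ) : ℕ := sSup (goodSet m L lam N)

/-- The optimal weights `α*_i = (m_i/M_p)·[1 + M_p·(L̄_p − L̂_i)/λ]₊` (client `i` 0-indexed). -/
def alphaStar (m L : ℕ → ℝ) (lam : ℝ) (N : ℕ) (i : ℕ) : ℝ :=
  (m i / Mpart m (pIdx m L lam N)) *
    max 0 (1 + Mpart m (pIdx m L lam N) * (Lbar m L (pIdx m L lam N) - L i) / lam)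

/-- The objective `F(α) = Σ_i α_i·L̂_i + (λ/2)·Σ_i α_i²/m_i`. -/
def objF (N : ℕ) (m L : ℕ → ℝ) (lam : ℝ) (α : ℕ → ℝ) : ℝ :=
  ∑ i ∈ Finset.range N, α i * L i + lam / 2 * ∑ i ∈ Finset.range N, (α i) ^ 2 / m i

lemma Mpart_pos {N : ℕ} {m : ℕ → ℝ} (hm : ∀ i < N, 0 < m i) {k : ℕ} (hk : 1 ≤ k) (hkN : k ≤ N) :
    0 < Mpart m k :=
  Finset.sum_pos (fun i hi => hm i (by have := Finset.mem_range.mp hi; omega))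
    (Finset.nonempty_range_iff.mpr (by omega))

/-- The positivity condition with all divisions cleared. -/
lemma bracket_pos_iff {m L : ℕ → ℝ} {lam : ℝ} (hlam : 0 < lam) {k : ℕ} (hM : 0 < Mpart m k)
    (x : ℝ) :
    0 < 1 + Mpart m k * (Lbar m L k - x) / lam ↔
      Mpart m k * x < lam + ∑ i ∈ Finset.range k, m i * L i := by
  have h : 1 + Mpart m k * (Lbar m L k - x) / lam =
      (lam + ∑ i ∈ Finset.range k, m i * L i - Mpart m k * x) / lam := by
    unfold Lbar
    field_simp
    ring
  rw [h, div_pos_iff_of_pos_right hlam, sub_pos]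

/-- The maximum defining `p` is attained: `goodSet` is bounded by `N` and contains `1`. -/
lemma pIdx_isGreatest {N : ℕ} (hN : 1 ≤ N) {m L : ℕ → ℝ} (hm : ∀ i < N, 0 < m i) {lam : ℝ}
    (hlam : 0 < lam) : IsGreatest (goodSet m L lam N) (pIdx m L lam N) := by
  have hbdd : BddAbove (goodSet m L lam N) := ⟨N, fun k hk => (Finset.mem_Icc.mp hk.1).2⟩
  have hne : (goodSet m L lam N).Nonempty := by
    refine ⟨1, Finset.mem_Icc.mpr ⟨le_rfl, hN⟩, ?_⟩
    rw [bracket_pos_iff hlam (Mpart_pos hm le_rfl hN)]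
    simp [Mpart, hlam]
  exact ⟨Nat.sSup_mem hne hbdd, fun k hk => le_csSup hbdd hk⟩

lemma alphaStar_ne_zero_iff {N : ℕ} (hN : 1 ≤ N) {m L : ℕ → ℝ} (hm : ∀ i < N, 0 < m i) {lam : ℝ}
    (hlam : 0 < lam) {i : ℕ} (hi : i < N) :
    alphaStar m L lam N i ≠ 0 ↔ Mpart m (pIdx m L lam N) * L i <
      lam + ∑ j ∈ Finset.range (pIdx m L lam N), m j * L j := by
  have hp := Finset.mem_Icc.mp (pIdx_isGreatest (L := L) hN hm hlam).1.1
  have hM := Mpart_pos hm hp.1 hp.2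
  rw [← bracket_pos_iff hlam hM, alphaStar, mul_ne_zero_iff_left (div_pos (hm i hi) hM).ne',
    ne_eq, max_eq_left_iff, not_le]

/-- `α*_i = 0` iff `L̂_i ≥ λ/M_p + L̄_p`; in particular `α*` has exactly
`p` nonzero components. -/
theorem alphaStar_zero_iff
    (N : ℕ) (hN : 1 ≤ N) (m L : ℕ → ℝ)
    (hm : ∀ i < N, 0 < m i)
    (hL : ∀ i j, i ≤ j → j < N → L i ≤ L j)
    (lam : ℝ) (hlam : 0 < lam) :
    (∀ i < N, (alphaStar m L lam N i = 0 ↔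
      lam / Mpart m (pIdx m L lam N) + Lbar m L (pIdx m L lam N) ≤ L i)) ∧
    ((Finset.range N).filter (fun i => alphaStar m L lam N i ≠ 0)).card =
      pIdx m L lam N := by
  have hgr := pIdx_isGreatest (L := L) hN hm hlam
  have hp := Finset.mem_Icc.mp hgr.1.1
  have hM := Mpart_pos hm hp.1 hp.2
  have hgood := (bracket_pos_iff hlam hM _).mp hgr.1.2
  refine ⟨fun i hi => ?_, ?_⟩
  · rw [← not_iff_not, ← ne_eq, alphaStar_ne_zero_iff hN hm hlam hi, not_le, Lbar, ← add_div,
      lt_div_iff₀ hM, mul_comm]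
  · have hset : (Finset.range N).filter (fun i => alphaStar m L lam N i ≠ 0) =
        Finset.range (pIdx m L lam N) := by
      ext i
      rw [Finset.mem_filter, Finset.mem_range, Finset.mem_range]
      constructor
      · rintro ⟨hi, hne⟩
        rw [alphaStar_ne_zero_iff hN hm hlam hi] at hne
        by_contra! hpi
        have hlt : pIdx m L lam N + 1 ≤ N := by omega
        -- `p + 1` would belong to `goodSet`, against maximality
        have hmem : pIdx m L lam N + 1 ∈ goodSet m L lam N := by
          refine ⟨Finset.mem_Icc.mpr ⟨by omega, hlt⟩, ?_⟩
          rw [bracket_pos_iff hlam (Mpart_pos hm (by omega) hlt), Nat.add_sub_cancel,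
            Finset.sum_range_succ, Mpart, Finset.sum_range_succ, ← Mpart]
          have := mul_le_mul_of_nonneg_left (hL _ i hpi hi) hM.le
          linarith
        have := hgr.2 hmem
        omega
      · intro hip
        have hi : i < N := by omega
        refine ⟨hi, (alphaStar_ne_zero_iff hN hm hlam hi).mpr (lt_of_le_of_lt ?_ hgood)⟩
        exact mul_le_mul_of_nonneg_left (hL _ _ (by omega) (by omega)) hM.le
    rw [hset, Finset.card_range]
end
end

section
/- If N ≥ 2 and the smallest empirical loss is strictly smallest, i.e. L̂_1 < L̂_2, then for every λ with 0 < λ ≤ m_1·(L̂_2 − L̂_1) one has p = 1 and the optimal weight vector is the vertex α(λ) = e_1, i.e. α_1(λ) = 1 and α_i(λ) = 0 for all i ≥ 2; the client with the lowest empirical risk receives all the weight. -/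
/-!
For `k ≥ 1` the average loss satisfies
`M_k (L̄_k − L̂_k) = Σ_{i ≤ k} m_i (L̂_i − L̂_k)`, a sum of nonpositive terms by sortedness.
When `k ≥ 2`, its first term alone is at most `m_1 (L̂_1 − L̂_2) ≤ −λ`, so `k` fails the condition
defining `p`, whereas `k = 1` gives the value `1 > 0`. Hence `p = 1`. With `M_1 = m_1` and
`L̄_1 = L̂_1` the weight formula gives `α_1 = 1`, and the same bound on `m_1 (L̂_1 − L̂_i)` makes
every other positive part vanish.
-/

open Finset

noncomputable section

lemma Mpart_mul_Lbar_sub (m L : ℕ → ℝ) (k : ℕ) (c : ℝ) (hM : Mpart m k ≠ 0) :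
    Mpart m k * (Lbar m L k - c) = ∑ i ∈ Finset.range k, m i * (L i - c) := by
  unfold Lbar
  rw [mul_sub, mul_div_cancel₀ _ hM]
  simp only [mul_sub, Finset.sum_sub_distrib, ← Finset.sum_mul]
  rfl

/-- if `N ≥ 2` and `L̂_1 < L̂_2`, then for `0 < λ ≤ m_1·(L̂_2 − L̂_1)`
one has `p = 1` and `α(λ) = e_1`: the client with the lowest empirical risk receives
all the weight. -/
theorem alphaStar_small_lambda
    (N : ℕ) (hN : 2 ≤ N) (m L : ℕ → ℝ)
    (hm : ∀ i < N, 0 < m i)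
    (hL : ∀ i j, i ≤ j → j < N → L i ≤ L j)
    (hgap : L 0 < L 1) :
    ∀ lam : ℝ, 0 < lam → lam ≤ m 0 * (L 1 - L 0) →
      pIdx m L lam N = 1 ∧
      alphaStar m L lam N 0 = 1 ∧
      ∀ i, 1 ≤ i → i < N → alphaStar m L lam N i = 0 := by
  intro lam hlam hle
  have h0 : 0 < m 0 := hm 0 (by omega)
  have hM1 : Mpart m 1 = m 0 := by simp [Mpart]
  have hL1 : Lbar m L 1 = L 0 := by
    simp [Lbar, hM1, h0.ne']
  have hkey : ∀ j, 1 ≤ j → j < N → m 0 * (L 0 - L j) ≤ -lam := by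
    intro j hj hjN
    have := mul_le_mul_of_nonneg_left (hL 1 j hj hjN) h0.le
    linarith
  have hset : goodSet m L lam N = {1} := by
    ext k
    simp only [goodSet, Set.mem_ofPred_eq, Finset.mem_Icc, Set.mem_singleton_iff]
    constructor
    · rintro ⟨⟨hk1, hkN⟩, hpos⟩
      by_contra hne
      have hMpos : 0 < Mpart m k :=
        Finset.sum_pos (fun i hi => hm i (by have := Finset.mem_range.1 hi; omega))
          ⟨0, Finset.mem_range.2 (by omega)⟩
      -- all terms of the sum are nonpositive, so the sum is at most its first term
      have hsum : ∑ i ∈ Finset.range k, m i * (L i - L (k - 1)) ≤ m 0 * (L 0 - L (k - 1)) := by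
        rw [← Finset.add_sum_erase _ _ (Finset.mem_range.2 (show 0 < k by omega))]
        have : ∑ i ∈ (Finset.range k).erase 0, m i * (L i - L (k - 1)) ≤ 0 := by
          refine Finset.sum_nonpos fun i hi => ?_
          have hik := Finset.mem_range.1 (Finset.mem_of_mem_erase hi)
          exact mul_nonpos_of_nonneg_of_nonpos (hm i (by omega)).le
            (sub_nonpos.2 (hL i (k - 1) (by omega) (by omega)))
        linarith
      have hk := hkey (k - 1) (by omega) (by omega)
      rw [Mpart_mul_Lbar_sub m L k _ hMpos.ne'] at hpos
      have := (div_le_iff₀ hlam).2 ((hsum.trans hk).trans_eq (neg_one_mul lam).symm)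
      linarith
    · rintro rfl
      refine ⟨⟨le_rfl, by omega⟩, ?_⟩
      simp [hL1]
  have hp : pIdx m L lam N = 1 := by
    rw [pIdx, hset, csSup_singleton]
  refine ⟨hp, ?_, fun i hi hiN => ?_⟩
  · simp [alphaStar, hp, hM1, hL1, h0.ne']
  · have := (div_le_iff₀ hlam).2
      (show m 0 * (L 0 - L i) ≤ (-1) * lam by linarith [hkey i hi hiN])
    rw [alphaStar, hp, hM1, hL1, max_eq_left (by linarith), mul_zero]
end
end
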